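/- arXiv:math/0508174 — 5 statements merged into one kernel-verified Lean document; each statement's English description precedes it below -/
import Mathlib

section
/- Let (a, b, c) be integers with a² + b³ = c⁷, gcd(a, b, c) = 1, and 3 ∣ c. Then there exists an integer t, not divisible by 3, such that a ≡ −t³ (mod 3⁷) and b ≡ −t² (mod 3⁷). -/
/-!
Modulo `c ^ n` the equation reads `a ^ k = -b ^ (k + 1)`, and primitivity makes `b` a unit, so
`t = a / b` satisfies `t ^ k = -b` and hence `t ^ (k + 1) = -b * t = -a`. For `k = 2`, `n = 7` the
resulting congruences modulo `c ^ 7` can be reduced modulo `3 ^ 7` as soon as `3 ∣ c`.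
-/

section CommRing

variable {R : Type*} [CommRing R] {a b c x y d : R} {k n : ℕ}

theorem exists_eq_neg_pow_of_pow_add_pow_succ_eq_zero (hb : IsUnit b)
    (h : a ^ k + b ^ (k + 1) = 0) : ∃ t : R, a = -t ^ (k + 1) ∧ b = -t ^ k := by
  obtain ⟨t, rfl⟩ : b ∣ a := hb.dvd
  have hbt : b = -t ^ k := by
    refine (hb.pow k).mul_left_cancel ?_
    linear_combination h
  exact ⟨t, by linear_combination t * hbt, hbt⟩

theorem isUnit_quotientMk_span_singleton_of_isCoprime (h : IsCoprime x d) :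
    IsUnit (Ideal.Quotient.mk (Ideal.span {d}) x) := by
  have hmap := h.map (Ideal.Quotient.mk (Ideal.span {d}))
  rwa [Ideal.Quotient.mk_singleton_self, isCoprime_zero_right] at hmap

theorem exists_dvd_add_pow_of_dvd_pow_add_pow_succ (hb : IsCoprime b d)
    (h : d ∣ a ^ k + b ^ (k + 1)) : ∃ t : R, d ∣ a + t ^ (k + 1) ∧ d ∣ b + t ^ k := by
  simp only [← Ideal.Quotient.eq_zero_iff_dvd, map_add, map_pow] at h ⊢
  obtain ⟨s, ha, hb⟩ := exists_eq_neg_pow_of_pow_add_pow_succ_eq_zero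
    (isUnit_quotientMk_span_singleton_of_isCoprime hb) h
  obtain ⟨t, rfl⟩ := Ideal.Quotient.mk_surjective s
  exact ⟨t, eq_neg_iff_add_eq_zero.1 ha, eq_neg_iff_add_eq_zero.1 hb⟩

theorem isCoprime_of_dvd_add (hx : IsCoprime x d) (h : d ∣ x + y) : IsCoprime y d := by
  obtain ⟨z, hz⟩ := h
  obtain rfl : y = -x + d * z := by linear_combination hz
  exact hx.neg_left.add_mul_left_left z

theorem isCoprime_of_pow_mem_span_pair (hspan : Ideal.span {a, b, c} = ⊤)
    (h : a ^ k ∈ Ideal.span {b, c}) : IsCoprime b c := by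
  have hcop : IsCoprime (Ideal.span {a}) (Ideal.span {b, c}) := by
    rwa [Ideal.isCoprime_iff_sup_eq, ← Ideal.span_insert]
  have hpow : IsCoprime (Ideal.span {a ^ k}) (Ideal.span {b, c}) := by
    rw [← Ideal.span_singleton_pow]
    exact hcop.pow_left
  have hle : Ideal.span {a ^ k} ≤ Ideal.span {b, c} := (Ideal.span_singleton_le_iff_mem _).2 h
  rw [Ideal.isCoprime_iff_sup_eq, sup_eq_right.2 hle, Ideal.eq_top_iff_one,
    Ideal.mem_span_pair] at hpow
  exact hpow

theorem isCoprime_of_pow_add_pow_succ_eq_pow (hn : n ≠ 0) (h : a ^ k + b ^ (k + 1) = c ^ n)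
    (hspan : Ideal.span {a, b, c} = ⊤) : IsCoprime b c := by
  have hb : b ∈ Ideal.span {b, c} := Ideal.subset_span (by simp)
  have hc : c ∈ Ideal.span {b, c} := Ideal.subset_span (by simp)
  have ha : a ^ k ∈ Ideal.span {b, c} := by
    rw [eq_sub_of_add_eq h]
    exact sub_mem (Ideal.pow_mem_of_mem _ hc n (Nat.pos_of_ne_zero hn))
      (Ideal.pow_mem_of_mem _ hb (k + 1) k.succ_pos)
  exact isCoprime_of_pow_mem_span_pair hspan ha

theorem primitive_solution_mod_three_pow_seven_general (hk : k ≠ 0) (hn : n ≠ 0)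
    (h : a ^ k + b ^ (k + 1) = c ^ n) (hspan : Ideal.span {a, b, c} = ⊤) :
    ∃ t : R, IsCoprime t c ∧ c ^ n ∣ a + t ^ (k + 1) ∧ c ^ n ∣ b + t ^ k := by
  have hbc : IsCoprime b c := isCoprime_of_pow_add_pow_succ_eq_pow hn h hspan
  obtain ⟨t, ha, hb⟩ :=
    exists_dvd_add_pow_of_dvd_pow_add_pow_succ (hbc.pow_right (n := n)) h.symm.dvd
  have htc : IsCoprime (t ^ k) c := isCoprime_of_dvd_add hbc ((dvd_pow_self c hn).trans hb)
  exact ⟨t, (IsCoprime.pow_left_iff (Nat.pos_of_ne_zero hk)).1 htc, ha, hb⟩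

end CommRing

theorem span_triple_eq_top_of_gcd_gcd_eq_one {a b c : ℤ}
    (h : Int.gcd a (Int.gcd b c : ℤ) = 1) : Ideal.span {a, b, c} = ⊤ := by
  rw [Ideal.span_insert, ← span_gcd, ← Int.coe_gcd, ← Ideal.isCoprime_iff_sup_eq,
    Ideal.isCoprime_span_singleton_iff]
  exact Int.isCoprime_iff_gcd_eq_one.2 h

theorem int_modEq_neg_iff_dvd_add {m x y : ℤ} : x ≡ -y [ZMOD m] ↔ m ∣ x + y := by
  rw [Int.modEq_comm, Int.modEq_iff_dvd, sub_neg_eq_add]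

/-- If `(a, b, c)` is a primitive solution to `a² + b³ = c⁷` with `3 ∣ c`, then there is
an integer `t` not divisible by `3` with `a ≡ -t³` and `b ≡ -t²` modulo `3⁷`. -/
theorem primitive_solution_mod_three_pow_seven (a b c : ℤ)
    (h : a ^ 2 + b ^ 3 = c ^ 7) (hgcd : Int.gcd a (Int.gcd b c : ℤ) = 1)
    (h3 : (3 : ℤ) ∣ c) :
    ∃ t : ℤ, ¬ (3 : ℤ) ∣ t ∧ a ≡ -t ^ 3 [ZMOD 3 ^ 7] ∧ b ≡ -t ^ 2 [ZMOD 3 ^ 7] := by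
  obtain ⟨t, htc, ha, hb⟩ := primitive_solution_mod_three_pow_seven_general
    two_ne_zero (by norm_num) h (span_triple_eq_top_of_gcd_gcd_eq_one hgcd)
  have ht3 : IsCoprime 3 t := (htc.of_isCoprime_of_dvd_right h3).symm
  have h3c : (3 : ℤ) ^ 7 ∣ c ^ 7 := pow_dvd_pow_of_dvd h3 7
  exact ⟨t, Int.prime_three.coprime_iff_not_dvd.1 ht3,
    int_modEq_neg_iff_dvd_add.2 (h3c.trans ha), int_modEq_neg_iff_dvd_add.2 (h3c.trans hb)⟩
end

section
/- Let (a, b, c) be integers with a² + b³ = c⁷, gcd(a, b, c) = 1, 2 ∣ c, and a ≡ 1 (mod 4). Then there exists an odd integer t with t ≡ −1 (mod 4) such that a ≡ −t³ (mod 2⁷) and b ≡ −t² (mod 2⁷). -/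
/-!
On units, the cuspidal cubic `x² = y³` is parametrised by `t = x / y`, since `(x / y)³ = x` and
`(x / y)² = y`. The congruence `a² + b³ ≡ 0 (mod 2⁷)` puts `(-a, -b)` on this curve, and `a`, hence
`b`, is invertible modulo `2⁷`. Finally `t³ ≡ -a ≡ -1 (mod 4)` forces `t ≡ -1 (mod 4)`, because
`t² ≡ 1 (mod 8)` for odd `t`.
-/

theorem exists_eq_pow_three_and_eq_pow_two {M : Type*} [CommMonoid M] {x y : M} (hy : IsUnit y)
    (h : x ^ 2 = y ^ 3) : ∃ t, x = t ^ 3 ∧ y = t ^ 2 := by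
  obtain ⟨u, rfl⟩ := hy
  refine ⟨x * ↑u⁻¹, ?_, ?_⟩
  · calc
      x = x * (u ^ 3 * ↑u⁻¹ ^ 3) := by rw [← mul_pow, u.mul_inv, one_pow, mul_one]
      _ = (x * ↑u⁻¹) ^ 3 := by rw [← h, mul_pow, ← mul_assoc, ← pow_succ']
  · calc
      (u : M) = u * (u ^ 2 * ↑u⁻¹ ^ 2) := by rw [← mul_pow, u.mul_inv, one_pow, mul_one]
      _ = (x * ↑u⁻¹) ^ 2 := by rw [mul_pow, h, ← mul_assoc, ← pow_succ']

theorem exists_eq_neg_pow_three_and_eq_neg_pow_two {R : Type*} [CommRing R] {a b : R}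
    (ha : IsUnit a) (h : a ^ 2 + b ^ 3 = 0) : ∃ t, a = -t ^ 3 ∧ b = -t ^ 2 := by
  have cusp : (-a) ^ 2 = (-b) ^ 3 := by linear_combination h
  have neg_b_isUnit : IsUnit (-b) :=
    (isUnit_pow_iff three_ne_zero).1 (cusp ▸ ha.neg.pow 2)
  simpa only [neg_eq_iff_eq_neg] using exists_eq_pow_three_and_eq_pow_two neg_b_isUnit cusp

theorem exists_modEq_neg_pow_three_and_modEq_neg_pow_two {a b m : ℤ} (ha : IsCoprime a m)
    (h : a ^ 2 + b ^ 3 ≡ 0 [ZMOD m]) :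
    ∃ t : ℤ, a ≡ -t ^ 3 [ZMOD m] ∧ b ≡ -t ^ 2 [ZMOD m] := by
  have modEq_iff (x y : ℤ) : x ≡ y [ZMOD m] ↔ (x : ZMod m.natAbs) = y := by
    rw [ZMod.intCast_eq_intCast_iff, Int.modEq_natAbs]
  have a_isUnit : IsUnit (a : ZMod m.natAbs) := by
    rw [ZMod.coe_int_isUnit_iff_isCoprime, Int.natCast_natAbs]
    exact ha.symm.abs_left
  have sum_eq_zero : (a : ZMod m.natAbs) ^ 2 + (b : ZMod m.natAbs) ^ 3 = 0 := by
    exact_mod_cast (modEq_iff _ _).1 h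
  obtain ⟨s, has, hbs⟩ := exists_eq_neg_pow_three_and_eq_neg_pow_two a_isUnit sum_eq_zero
  obtain ⟨t, rfl⟩ := ZMod.intCast_surjective s
  exact ⟨t, (modEq_iff _ _).2 (mod_cast has), (modEq_iff _ _).2 (mod_cast hbs)⟩

theorem odd_of_modEq {x y m : ℤ} (hm : Even m) (h : x ≡ y [ZMOD m]) (hy : Odd y) : Odd x :=
  Int.odd_iff.2 (Eq.trans (h.of_dvd hm.two_dvd) (Int.odd_iff.1 hy))

theorem pow_three_modEq_self_of_odd {t : ℤ} (ht : Odd t) : t ^ 3 ≡ t [ZMOD 8] := by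
  refine (Int.modEq_iff_dvd.2 ?_).symm
  rw [show t ^ 3 - t = (t ^ 2 - 1) * t by ring]
  exact (Int.eight_dvd_sq_sub_one_of_odd ht).mul_right t

theorem primitive_solution_mod_two_pow_seven_general {a b m : ℤ} (hm : 4 ∣ m)
    (hcop : IsCoprime a m) (h : a ^ 2 + b ^ 3 ≡ 0 [ZMOD m]) (ha : a ≡ 1 [ZMOD 4]) :
    ∃ t : ℤ, Odd t ∧ t ≡ -1 [ZMOD 4] ∧ a ≡ -t ^ 3 [ZMOD m] ∧ b ≡ -t ^ 2 [ZMOD m] := by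
  obtain ⟨t, hat, hbt⟩ := exists_modEq_neg_pow_three_and_modEq_neg_pow_two hcop h
  have cube_modEq_neg_one : t ^ 3 ≡ -1 [ZMOD 4] := by
    simpa only [neg_neg] using ((hat.of_dvd hm).symm.trans ha).neg
  have t_odd : Odd t :=
    (Int.odd_pow' three_ne_zero).1 (odd_of_modEq (by decide) cube_modEq_neg_one (by decide))
  have cube_modEq_self : t ^ 3 ≡ t [ZMOD 4] :=
    (pow_three_modEq_self_of_odd t_odd).of_dvd (by norm_num)
  exact ⟨t, t_odd, cube_modEq_self.symm.trans cube_modEq_neg_one, hat, hbt⟩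

/-- If `(a, b, c)` is a primitive solution to `a² + b³ = c⁷` with `2 ∣ c` and `a ≡ 1 (mod 4)`,
then there is an odd integer `t ≡ -1 (mod 4)` with `a ≡ -t³` and `b ≡ -t²` modulo `2⁷`. -/
theorem primitive_solution_mod_two_pow_seven (a b c : ℤ)
    (h : a ^ 2 + b ^ 3 = c ^ 7) (hgcd : Int.gcd a (Int.gcd b c : ℤ) = 1)
    (h2 : (2 : ℤ) ∣ c) (ha : a ≡ 1 [ZMOD 4]) :
    ∃ t : ℤ, Odd t ∧ t ≡ -1 [ZMOD 4] ∧
      a ≡ -t ^ 3 [ZMOD 2 ^ 7] ∧ b ≡ -t ^ 2 [ZMOD 2 ^ 7] := by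
  have hcop : IsCoprime a (2 ^ 7) :=
    (Int.isCoprime_two_right.2 (odd_of_modEq (by decide) ha odd_one)).pow_right
  exact primitive_solution_mod_two_pow_seven_general ⟨2 ^ 5, by norm_num⟩ hcop
    (Int.modEq_zero_iff_dvd.2 (h ▸ pow_dvd_pow_of_dvd h2 7)) ha
end

section
/- Let F₀ = x³y + y³z + z³x and let Φ₆, Φ₁₄, Φ₂₁ be the covariants of F₀ defined below. If (x, y, z) ∈ ℂ³ is nonzero and F₀(x, y, z) = 0, then no two of the three values Φ₆(x, y, z), Φ₁₄(x, y, z), Φ₂₁(x, y, z) vanish simultaneously. -/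
open MvPolynomial

noncomputable section

/-- The Klein quartic form `F₀ = x³y + y³z + z³x`. -/
def F₀ : MvPolynomial (Fin 3) ℚ := X 0 ^ 3 * X 1 + X 1 ^ 3 * X 2 + X 2 ^ 3 * X 0

/-- Partial derivative with respect to the `i`-th variable. -/
def d (i : Fin 3) (f : MvPolynomial (Fin 3) ℚ) : MvPolynomial (Fin 3) ℚ := pderiv i f

/-- The degree-6 covariant `Φ₆ = Ψ₆(F₀)`: `-(1/54)` times the Hessian determinant of `F₀`. -/
def Φ₆ : MvPolynomial (Fin 3) ℚ :=
  C (-(1 : ℚ) / 54) *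
    Matrix.det !![d 0 (d 0 F₀), d 0 (d 1 F₀), d 0 (d 2 F₀);
                  d 1 (d 0 F₀), d 1 (d 1 F₀), d 1 (d 2 F₀);
                  d 2 (d 0 F₀), d 2 (d 1 F₀), d 2 (d 2 F₀)]

/-- The degree-14 covariant `Φ₁₄ = Ψ₁₄(F₀)`: `(1/9)` times the bordered Hessian determinant. -/
def Φ₁₄ : MvPolynomial (Fin 3) ℚ :=
  C ((1 : ℚ) / 9) *
    Matrix.det !![d 0 (d 0 F₀), d 0 (d 1 F₀), d 0 (d 2 F₀), d 0 Φ₆;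
                  d 1 (d 0 F₀), d 1 (d 1 F₀), d 1 (d 2 F₀), d 1 Φ₆;
                  d 2 (d 0 F₀), d 2 (d 1 F₀), d 2 (d 2 F₀), d 2 Φ₆;
                  d 0 Φ₆,       d 1 Φ₆,       d 2 Φ₆,       0]

/-- The degree-21 covariant `Φ₂₁ = Ψ₂₁(F₀)`: `(1/14)` times the Jacobian determinant of
`(F₀, Φ₆, Φ₁₄)`. -/
def Φ₂₁ : MvPolynomial (Fin 3) ℚ :=
  C ((1 : ℚ) / 14) *
    Matrix.det !![d 0 F₀,  d 1 F₀,  d 2 F₀;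
                  d 0 Φ₆,  d 1 Φ₆,  d 2 Φ₆;
                  d 0 Φ₁₄, d 1 Φ₁₄, d 2 Φ₁₄]

/-!
On the quartic `F₀ = 0`, the invariants `p = xyz` and `G = -(x²y³ + y²z³ + z²x³)` of a group of
automorphisms of order 21 satisfy `G³ = p (Φ₆² + 13 Φ₆ p² + 49 p⁴)` and
`Φ₁₄ p = G (Φ₆² + 245 Φ₆ p² + 2401 p⁴)`. The derivation `D h = ∂(F₀, Φ₆, h)/∂(x, y, z)` kills `F₀`
and `Φ₆` and sends `Φ₁₄` to `14 Φ₂₁`, so applying it to the second relation expresses `Φ₂₁ p` as a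
polynomial in `Φ₆` and `p²`. The quotient by this group is the modular curve `X₀(7)`,
with coordinate `Φ₆ / p²`, and the classical formulas for `j` and `j - 1728` on it give Klein's
relation `Φ₁₄³ = Φ₂₁² + 1728 Φ₆⁷` on the quartic. Hence if two of the covariants vanish at a point
of the quartic, so does the third. When `Φ₆ = Φ₁₄ = 0`, the two relations force `p = 0`, so two
coordinates vanish, and `Φ₁₄`, which is `t¹⁴` at `(t, 0, 0)`, makes the remaining one vanish too.
-/

namespace KleinQuartic

open Matrix

theorem derivation_ofNat {R A M : Type*} [CommSemiring R] [CommSemiring A] [Algebra R A]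
    [AddCancelCommMonoid M] [Module A M] [Module R M] (D : Derivation R A M) (n : ℕ)
    [n.AtLeastTwo] : D ofNat(n) = 0 :=
  D.map_natCast n

section Jacobian

variable {R : Type*} [CommRing R] (f g h : MvPolynomial (Fin 3) R)

/-- The Jacobian determinant `∂(f, g, h)/∂(x, y, z)` as a derivation in its last argument `h`: the
vector field `∇f × ∇g`, tangent to the level surfaces of `f` and `g`. -/
def jacobianDerivation : Derivation R (MvPolynomial (Fin 3) R) (MvPolynomial (Fin 3) R) :=
  ∑ i, ((pderiv · f) ⨯₃ (pderiv · g)) i • pderiv i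

theorem jacobianDerivation_apply :
    jacobianDerivation f g h = ((pderiv · f) ⨯₃ (pderiv · g)) ⬝ᵥ (pderiv · h) := by
  simp [jacobianDerivation, dotProduct, Fin.sum_univ_three]

theorem jacobianDerivation_eq_det :
    jacobianDerivation f g h = det !![pderiv 0 f, pderiv 1 f, pderiv 2 f;
                                      pderiv 0 g, pderiv 1 g, pderiv 2 g;
                                      pderiv 0 h, pderiv 1 h, pderiv 2 h] := by
  simp only [jacobianDerivation_apply, cross_apply, dotProduct, Fin.sum_univ_three, det_fin_three,
    of_apply, cons_val]
  ring

theorem jacobianDerivation_X (i : Fin 3) :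
    jacobianDerivation f g (X i) = ((pderiv · f) ⨯₃ (pderiv · g)) i := by
  simp [jacobianDerivation_apply, dotProduct, pderiv_X, Pi.single_apply]

theorem jacobianDerivation_self_left : jacobianDerivation f g f = 0 := by
  rw [jacobianDerivation_apply, dotProduct_comm, dot_self_cross]

theorem jacobianDerivation_self_right : jacobianDerivation f g g = 0 := by
  rw [jacobianDerivation_apply, dotProduct_comm, dot_cross_self]

variable {f h} in
theorem dvd_jacobianDerivation (hfh : f ∣ h) : f ∣ jacobianDerivation f g h := by
  obtain ⟨k, rfl⟩ := hfh
  rw [Derivation.leibniz, jacobianDerivation_self_left, smul_zero, add_zero]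
  exact dvd_mul_right f _

end Jacobian

theorem det_fin_four {R : Type*} [CommRing R] (A : Matrix (Fin 4) (Fin 4) R) :
    det A =
      A 0 0 * det !![A 1 1, A 1 2, A 1 3; A 2 1, A 2 2, A 2 3; A 3 1, A 3 2, A 3 3]
      - A 0 1 * det !![A 1 0, A 1 2, A 1 3; A 2 0, A 2 2, A 2 3; A 3 0, A 3 2, A 3 3]
      + A 0 2 * det !![A 1 0, A 1 1, A 1 3; A 2 0, A 2 1, A 2 3; A 3 0, A 3 1, A 3 3]
      - A 0 3 * det !![A 1 0, A 1 1, A 1 2; A 2 0, A 2 1, A 2 2; A 3 0, A 3 1, A 3 2] := by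
  rw [det_succ_row_zero, Fin.sum_univ_four]
  simp [det_fin_three, Fin.succAbove, Fin.lt_def, sub_eq_add_neg, pow_succ]

theorem d_F₀ (i : Fin 3) :
    d i F₀ = ![3 * X 0 ^ 2 * X 1 + X 2 ^ 3, X 0 ^ 3 + 3 * X 1 ^ 2 * X 2,
      X 1 ^ 3 + 3 * X 0 * X 2 ^ 2] i := by
  fin_cases i <;> simp [d, F₀, pderiv_X] <;> ring

theorem d_d_F₀ (i j : Fin 3) :
    d i (d j F₀) = !![6 * X 0 * X 1, 3 * X 0 ^ 2, 3 * X 2 ^ 2;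
                      3 * X 0 ^ 2, 6 * X 1 * X 2, 3 * X 1 ^ 2;
                      3 * X 2 ^ 2, 3 * X 1 ^ 2, 6 * X 0 * X 2] i j := by
  rw [d_F₀]
  fin_cases i <;> fin_cases j <;> simp [d, pderiv_X, derivation_ofNat] <;> ring

theorem Φ₆_eq : Φ₆ = X 0 ^ 5 * X 2 + X 0 * X 1 ^ 5 + X 1 * X 2 ^ 5
    - 5 * X 0 ^ 2 * X 1 ^ 2 * X 2 ^ 2 := by
  simp only [Φ₆, d_d_F₀, det_fin_three, of_apply, cons_val]
  polynomial

theorem d_Φ₆ (i : Fin 3) :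
    d i Φ₆ = ![5 * X 0 ^ 4 * X 2 + X 1 ^ 5 - 10 * X 0 * X 1 ^ 2 * X 2 ^ 2,
      5 * X 0 * X 1 ^ 4 + X 2 ^ 5 - 10 * X 0 ^ 2 * X 1 * X 2 ^ 2,
      X 0 ^ 5 + 5 * X 1 * X 2 ^ 4 - 10 * X 0 ^ 2 * X 1 ^ 2 * X 2] i := by
  rw [Φ₆_eq]
  fin_cases i <;> simp [d, pderiv_X, derivation_ofNat] <;> ring

theorem Φ₁₄_eq : Φ₁₄ =
    X 0 ^ 14 + X 1 ^ 14 + X 2 ^ 14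
    - 34 * (X 0 ^ 11 * X 1 ^ 2 * X 2 + X 0 * X 1 ^ 11 * X 2 ^ 2 + X 0 ^ 2 * X 1 * X 2 ^ 11)
    - 250 * (X 0 ^ 9 * X 1 * X 2 ^ 4 + X 0 ^ 4 * X 1 ^ 9 * X 2 + X 0 * X 1 ^ 4 * X 2 ^ 9)
    + 375 * (X 0 ^ 8 * X 1 ^ 4 * X 2 ^ 2 + X 0 ^ 2 * X 1 ^ 8 * X 2 ^ 4
      + X 0 ^ 4 * X 1 ^ 2 * X 2 ^ 8)
    + 18 * (X 0 ^ 7 * X 1 ^ 7 + X 1 ^ 7 * X 2 ^ 7 + X 0 ^ 7 * X 2 ^ 7)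
    - 126 * (X 0 ^ 6 * X 1 ^ 3 * X 2 ^ 5 + X 0 ^ 5 * X 1 ^ 6 * X 2 ^ 3
      + X 0 ^ 3 * X 1 ^ 5 * X 2 ^ 6) := by
  simp only [Φ₁₄, d_d_F₀, d_Φ₆, det_fin_four, det_fin_three, of_apply, cons_val]
  polynomial

/-- The product of the coordinates, the cubic invariant of the group of order 21 generated by
`diag(ζ, ζ⁴, ζ²)`, with `ζ` a primitive seventh root of unity, and the cyclic permutation of the
coordinates. -/
def xyz : MvPolynomial (Fin 3) ℚ := X 0 * X 1 * X 2

/-- A quintic invariant of the same group of order 21; the sign is chosen so that its cube and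
`Φ₁₄ * xyz` are congruent modulo `F₀` to expressions with positive coefficients. -/
def quintic : MvPolynomial (Fin 3) ℚ :=
  -(X 0 ^ 2 * X 1 ^ 3 + X 1 ^ 2 * X 2 ^ 3 + X 2 ^ 2 * X 0 ^ 3)

theorem F₀_dvd_quintic_pow_three_sub :
    F₀ ∣ quintic ^ 3 - xyz * (Φ₆ ^ 2 + 13 * Φ₆ * xyz ^ 2 + 49 * xyz ^ 4) := by
  refine Dvd.intro (5 * xyz ^ 2 * quintic
    - (X 0 ^ 8 * X 2 ^ 3 + X 0 ^ 3 * X 1 ^ 8 + X 1 ^ 3 * X 2 ^ 8)) ?_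
  rw [Φ₆_eq, F₀, xyz, quintic]
  ring

theorem F₀_dvd_Φ₁₄_mul_xyz_sub :
    F₀ ∣ Φ₁₄ * xyz - quintic * (Φ₆ ^ 2 + 245 * Φ₆ * xyz ^ 2 + 2401 * xyz ^ 4) := by
  refine Dvd.intro (X 0 ^ 12 * X 2 + X 0 * X 1 ^ 12 + X 1 * X 2 ^ 12
    - 34 * xyz ^ 2 * (X 0 ^ 7 + X 1 ^ 7 + X 2 ^ 7)
    + 20 * xyz * (X 0 ^ 6 * X 2 ^ 4 + X 0 ^ 4 * X 1 ^ 6 + X 1 ^ 4 * X 2 ^ 6)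
    + 646 * xyz ^ 3 * F₀) ?_
  rw [Φ₁₄_eq, Φ₆_eq, F₀, xyz, quintic]
  ring

/-- The derivation `h ↦ ∂(F₀, Φ₆, h)/∂(x, y, z)`, a vector field tangent to the Klein quartic that
serves to relate `Φ₂₁` to `Φ₁₄`. -/
def tangentDerivation : Derivation ℚ (MvPolynomial (Fin 3) ℚ) (MvPolynomial (Fin 3) ℚ) :=
  jacobianDerivation F₀ Φ₆

theorem tangentDerivation_X (i : Fin 3) :
    tangentDerivation (X i) = ((d · F₀) ⨯₃ (d · Φ₆)) i :=
  jacobianDerivation_X F₀ Φ₆ i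

theorem tangentDerivation_Φ₆ : tangentDerivation Φ₆ = 0 :=
  jacobianDerivation_self_right F₀ Φ₆

theorem tangentDerivation_Φ₁₄ : tangentDerivation Φ₁₄ = 14 * Φ₂₁ := by
  rw [tangentDerivation, jacobianDerivation_eq_det, Φ₂₁]
  simp only [d]
  polynomial

theorem F₀_dvd_tangentDerivation_xyz_sub :
    F₀ ∣ tangentDerivation xyz - 21 * quintic ^ 2 := by
  refine Dvd.intro (-7 * (Φ₆ + 11 * xyz ^ 2)) ?_
  simp only [xyz, Derivation.leibniz, tangentDerivation_X, cross_apply, d_F₀, d_Φ₆, cons_val,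
    smul_eq_mul]
  rw [Φ₆_eq, F₀, quintic]
  ring

theorem F₀_dvd_tangentDerivation_quintic_sub :
    F₀ ∣ tangentDerivation quintic - 7 * (Φ₆ ^ 2 + 39 * Φ₆ * xyz ^ 2 + 245 * xyz ^ 4) := by
  refine Dvd.intro (7 * (X 0 ^ 6 * X 1 ^ 2 + X 1 ^ 6 * X 2 ^ 2 + X 2 ^ 6 * X 0 ^ 2)
    + 140 * xyz * quintic) ?_
  simp only [quintic, map_neg, map_add, Derivation.leibniz, Derivation.leibniz_pow,
    tangentDerivation_X, cross_apply, d_F₀, d_Φ₆, cons_val, smul_eq_mul, nsmul_eq_mul]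
  rw [Φ₆_eq, F₀, xyz]
  push_cast
  ring

theorem F₀_dvd_derivative_Φ₁₄_mul_xyz_sub :
    F₀ ∣ (14 * Φ₂₁ * xyz + Φ₁₄ * tangentDerivation xyz)
      - ((Φ₆ ^ 2 + 245 * Φ₆ * xyz ^ 2 + 2401 * xyz ^ 4) * tangentDerivation quintic
        + quintic * (490 * Φ₆ * xyz + 9604 * xyz ^ 3) * tangentDerivation xyz) := by
  have h : F₀ ∣ tangentDerivation _ := dvd_jacobianDerivation Φ₆ F₀_dvd_Φ₁₄_mul_xyz_sub
  convert h using 1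
  simp only [map_sub, map_add, Derivation.leibniz, Derivation.leibniz_pow, derivation_ofNat,
    tangentDerivation_Φ₆, tangentDerivation_Φ₁₄, smul_eq_mul, nsmul_eq_mul]
  push_cast
  ring

-- With `t = u / e` the coordinate of `X₀(7)`, this is `j = (j - 1728) + 1728` multiplied by
-- `u ^ 7 * e`, where `j = (t ^ 2 + 13 * t + 49) * (t ^ 2 + 245 * t + 2401) ^ 3 / t ^ 7`.
theorem modular_identity_level_seven {R : Type*} [CommRing R] (u e : R) :
    (u ^ 2 + 13 * u * e + 49 * e ^ 2) * (u ^ 2 + 245 * u * e + 2401 * e ^ 2) ^ 3 =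
      (u ^ 4 - 490 * u ^ 3 * e - 21609 * u ^ 2 * e ^ 2 - 235298 * u * e ^ 3 - 823543 * e ^ 4) ^ 2
        + 1728 * u ^ 7 * e := by
  ring

theorem aeval_eq_of_dvd_sub {σ R A : Type*} [CommRing R] [CommRing A] [Algebra R A] {v : σ → A}
    {F f g : MvPolynomial σ R} (hF : aeval v F = 0) (h : F ∣ f - g) : aeval v f = aeval v g := by
  rw [← sub_eq_zero, ← map_sub]
  exact zero_dvd_iff.1 (hF ▸ map_dvd (aeval v) h)

section Points

variable {K : Type*} [CommRing K] [Algebra ℚ K] {v : Fin 3 → K}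

theorem aeval_single_Φ₆ (i : Fin 3) (t : K) : aeval (Pi.single i t) Φ₆ = 0 := by
  rw [Φ₆_eq]
  fin_cases i <;> simp

theorem aeval_single_Φ₁₄ (i : Fin 3) (t : K) : aeval (Pi.single i t) Φ₁₄ = t ^ 14 := by
  rw [Φ₁₄_eq]
  fin_cases i <;> simp

theorem aeval_single_tangentDerivation_Φ₁₄ (i : Fin 3) (t : K) :
    aeval (Pi.single i t) (tangentDerivation Φ₁₄) = 14 * t ^ 21 := by
  rw [Φ₁₄_eq]
  simp only [map_add, map_sub, Derivation.leibniz, Derivation.leibniz_pow, derivation_ofNat,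
    tangentDerivation_X, cross_apply, d_F₀, d_Φ₆]
  fin_cases i <;> simp <;> ring

theorem aeval_quintic_pow_three (hF : aeval v F₀ = 0) :
    aeval v quintic ^ 3 = aeval v xyz *
      (aeval v Φ₆ ^ 2 + 13 * aeval v Φ₆ * aeval v xyz ^ 2 + 49 * aeval v xyz ^ 4) := by
  simpa using aeval_eq_of_dvd_sub hF F₀_dvd_quintic_pow_three_sub

theorem aeval_Φ₁₄_mul_xyz (hF : aeval v F₀ = 0) :
    aeval v Φ₁₄ * aeval v xyz = aeval v quintic *
      (aeval v Φ₆ ^ 2 + 245 * aeval v Φ₆ * aeval v xyz ^ 2 + 2401 * aeval v xyz ^ 4) := by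
  simpa using aeval_eq_of_dvd_sub hF F₀_dvd_Φ₁₄_mul_xyz_sub

variable [IsDomain K]

theorem aeval_single_Φ₂₁ (i : Fin 3) (t : K) : aeval (Pi.single i t) Φ₂₁ = t ^ 21 := by
  have := algebraRat.charZero K
  refine mul_left_cancel₀ (OfNat.ofNat_ne_zero 14) ?_
  rw [← aeval_single_tangentDerivation_Φ₁₄ i t, tangentDerivation_Φ₁₄, map_mul, map_ofNat]

theorem exists_eq_single_of_aeval_xyz_eq_zero (hF : aeval v F₀ = 0) (hxyz : aeval v xyz = 0) :
    ∃ i t, v = Pi.single i t := by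
  simp only [F₀, xyz, map_add, map_mul, map_pow, aeval_X, mul_eq_zero] at hF hxyz
  have two_coords_eq_zero : v 1 = 0 ∧ v 2 = 0 ∨ v 2 = 0 ∧ v 0 = 0 ∨ v 0 = 0 ∧ v 1 = 0 := by
    rcases hxyz with (h | h) | h
    · have : v 1 = 0 ∨ v 2 = 0 := by simpa [h] using hF
      tauto
    · have : v 2 = 0 ∨ v 0 = 0 := by simpa [h] using hF
      tauto
    · have : v 0 = 0 ∨ v 1 = 0 := by simpa [h] using hF
      tauto
  rcases two_coords_eq_zero with ⟨h, h'⟩ | ⟨h, h'⟩ | ⟨h, h'⟩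
  · exact ⟨0, v 0, by ext i; fin_cases i <;> simp [h, h']⟩
  · exact ⟨1, v 1, by ext i; fin_cases i <;> simp [h, h']⟩
  · exact ⟨2, v 2, by ext i; fin_cases i <;> simp [h, h']⟩

theorem aeval_Φ₂₁_mul_xyz (hF : aeval v F₀ = 0) (hxyz : aeval v xyz ≠ 0) :
    aeval v Φ₂₁ * aeval v xyz = -(aeval v Φ₆ ^ 4
      - 490 * aeval v Φ₆ ^ 3 * aeval v xyz ^ 2 - 21609 * aeval v Φ₆ ^ 2 * aeval v xyz ^ 4
      - 235298 * aeval v Φ₆ * aeval v xyz ^ 6 - 823543 * aeval v xyz ^ 8) := by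
  have := algebraRat.charZero K
  have hquintic := aeval_quintic_pow_three hF
  have hΦ₁₄ := aeval_Φ₁₄_mul_xyz hF
  have hDxyz := aeval_eq_of_dvd_sub hF F₀_dvd_tangentDerivation_xyz_sub
  have hDquintic := aeval_eq_of_dvd_sub hF F₀_dvd_tangentDerivation_quintic_sub
  have hΦ₂₁ := aeval_eq_of_dvd_sub hF F₀_dvd_derivative_Φ₁₄_mul_xyz_sub
  simp only [map_add, map_mul, map_pow, map_ofNat] at hDxyz hDquintic hΦ₂₁
  rw [hDxyz, hDquintic] at hΦ₂₁
  -- The extra factor `xyz` turns `hΦ₂₁` into a relation in `Φ₁₄ * xyz` and `quintic ^ 3`.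
  refine mul_left_cancel₀ (mul_ne_zero (OfNat.ofNat_ne_zero 14) hxyz) ?_
  linear_combination aeval v xyz * hΦ₂₁ - 21 * aeval v quintic ^ 2 * hΦ₁₄
    + 21 * (245 * aeval v Φ₆ * aeval v xyz ^ 2 + 7203 * aeval v xyz ^ 4
      - aeval v Φ₆ ^ 2) * hquintic

theorem klein_relation (hF : aeval v F₀ = 0) :
    aeval v Φ₁₄ ^ 3 = aeval v Φ₂₁ ^ 2 + 1728 * aeval v Φ₆ ^ 7 := by
  by_cases hxyz : aeval v xyz = 0
  · obtain ⟨i, t, rfl⟩ := exists_eq_single_of_aeval_xyz_eq_zero hF hxyz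
    rw [aeval_single_Φ₆, aeval_single_Φ₁₄, aeval_single_Φ₂₁]
    ring
  · have hquintic := aeval_quintic_pow_three hF
    have hΦ₁₄ := aeval_Φ₁₄_mul_xyz hF
    have hΦ₂₁ := aeval_Φ₂₁_mul_xyz hF hxyz
    refine mul_right_cancel₀ (pow_ne_zero 3 hxyz) ?_
    rw [← mul_pow, hΦ₁₄, mul_pow, hquintic]
    linear_combination aeval v xyz * modular_identity_level_seven (aeval v Φ₆) (aeval v xyz ^ 2)
      - aeval v xyz * congrArg (· ^ 2) hΦ₂₁

theorem eq_zero_of_aeval_Φ₆_eq_zero_of_aeval_Φ₁₄_eq_zero (hF : aeval v F₀ = 0)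
    (h₆ : aeval v Φ₆ = 0) (h₁₄ : aeval v Φ₁₄ = 0) : v = 0 := by
  have := algebraRat.charZero K
  have hxyz : aeval v xyz = 0 := by
    have quintic_or_xyz : aeval v quintic = 0 ∨ aeval v xyz = 0 := by
      simpa [h₆, h₁₄] using aeval_Φ₁₄_mul_xyz hF
    rcases quintic_or_xyz with hquintic | hxyz
    · simpa [h₆, hquintic] using aeval_quintic_pow_three hF
    · exact hxyz
  obtain ⟨i, t, rfl⟩ := exists_eq_single_of_aeval_xyz_eq_zero hF hxyz
  rw [aeval_single_Φ₁₄] at h₁₄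
  rw [eq_zero_of_pow_eq_zero h₁₄, Pi.single_zero]

end Points

end KleinQuartic

open KleinQuartic in
theorem klein_covariants_no_common_zero_general {K : Type*} [CommRing K] [IsDomain K] [Algebra ℚ K]
    (v : Fin 3 → K) (hv : v ≠ 0) (hF : aeval v F₀ = 0) :
    ¬ (aeval v Φ₆ = 0 ∧ aeval v Φ₁₄ = 0) ∧
    ¬ (aeval v Φ₆ = 0 ∧ aeval v Φ₂₁ = 0) ∧
    ¬ (aeval v Φ₁₄ = 0 ∧ aeval v Φ₂₁ = 0) := by
  have := algebraRat.charZero K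
  have hrel := klein_relation hF
  have not_Φ₆_Φ₁₄ : ¬ (aeval v Φ₆ = 0 ∧ aeval v Φ₁₄ = 0) := fun ⟨h₆, h₁₄⟩ =>
    hv (eq_zero_of_aeval_Φ₆_eq_zero_of_aeval_Φ₁₄_eq_zero hF h₆ h₁₄)
  refine ⟨not_Φ₆_Φ₁₄, fun ⟨h₆, h₂₁⟩ => not_Φ₆_Φ₁₄ ⟨h₆, ?_⟩,
    fun ⟨h₁₄, h₂₁⟩ => not_Φ₆_Φ₁₄ ⟨?_, h₁₄⟩⟩
  · simpa [h₆, h₂₁] using hrel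
  · simpa [h₁₄, h₂₁] using hrel

/-- On the Klein quartic `F₀ = 0` in `ℂ³ \ {0}`, no two of the covariants `Φ₆`, `Φ₁₄`, `Φ₂₁`
vanish simultaneously. -/
theorem klein_covariants_no_common_zero (v : Fin 3 → ℂ) (hv : v ≠ 0)
    (hF : aeval v F₀ = 0) :
    ¬ (aeval v Φ₆ = 0 ∧ aeval v Φ₁₄ = 0) ∧
    ¬ (aeval v Φ₆ = 0 ∧ aeval v Φ₂₁ = 0) ∧
    ¬ (aeval v Φ₁₄ = 0 ∧ aeval v Φ₂₁ = 0) :=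
  klein_covariants_no_common_zero_general v hv hF

end
end

section
/- Let K be a field containing no nontrivial 7th root of unity (i.e., x⁷ = 1 implies x = 1 for x ∈ K), and let τ : K → K be a field automorphism with τ∘τ∘τ = id. If a, b ∈ K are nonzero and satisfy τ(a)/a² = b⁷, then a⁻¹ = τ(τ(b))·τ(b)²·b⁴. -/
/-!
Iterating `τ a = b ^ m * a ^ k` gives `τⁿ a = N ^ m * a ^ kⁿ` with
`N = ∏ i < n, τⁱ(b) ^ k ^ (n - 1 - i)`. If `τⁿ a = a` and `kⁿ = m + 1`, cancelling `a` leaves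
`(a * N) ^ m = 1`, so `a * N = 1` as soon as there are no nontrivial `m`-th roots of unity.
The exponent `7` arises as `2 ^ 3 - 1`.
-/

open Finset

section IteratedTwist

variable {M F : Type*} [FunLike F M M] {a b : M} {k m n : ℕ}

theorem prod_iterate_pow_succ [CommMonoid M] [MonoidHomClass F M M] (τ : F) (b : M) (k n : ℕ) :
    ∏ i ∈ range (n + 1), τ^[i] b ^ k ^ (n - i) =
      τ (∏ i ∈ range n, τ^[i] b ^ k ^ (n - 1 - i)) * b ^ k ^ n := by
  simp [prod_range_succ', Function.iterate_succ_apply', Nat.sub_sub, add_comm]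

theorem iterate_eq_prod_pow_mul_pow [CommMonoid M] [MonoidHomClass F M M] {τ : F}
    (hab : τ a = b ^ m * a ^ k) (n : ℕ) :
    τ^[n] a = (∏ i ∈ range n, τ^[i] b ^ k ^ (n - 1 - i)) ^ m * a ^ k ^ n := by
  induction n with
  | zero => simp
  | succ n ih =>
    set N := ∏ i ∈ range n, τ^[i] b ^ k ^ (n - 1 - i)
    calc τ^[n + 1] a
        = τ N ^ m * (b ^ m * a ^ k) ^ k ^ n := by
          rw [Function.iterate_succ_apply', ih, map_mul, map_pow, map_pow, hab]
      _ = (τ N * b ^ k ^ n) ^ m * a ^ k ^ (n + 1) := by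
          rw [mul_pow, mul_pow, pow_right_comm, ← pow_mul a, ← pow_succ', mul_assoc]
      _ = _ := by rw [Nat.add_sub_cancel, prod_iterate_pow_succ]

theorem mul_prod_iterate_pow_pow_eq_one [CommMonoidWithZero M] [IsCancelMulZero M]
    [MonoidHomClass F M M] {τ : F} (hk : k ^ n = m + 1) (ha : a ≠ 0) (hτ : τ^[n] a = a)
    (hab : τ a = b ^ m * a ^ k) :
    (a * ∏ i ∈ range n, τ^[i] b ^ k ^ (n - 1 - i)) ^ m = 1 := by
  set N := ∏ i ∈ range n, τ^[i] b ^ k ^ (n - 1 - i)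
  refine mul_right_cancel₀ ha ?_
  calc (a * N) ^ m * a = N ^ m * a ^ k ^ n := by
        rw [hk, mul_pow, pow_succ, mul_comm (a ^ m), mul_assoc]
    _ = 1 * a := by rw [← iterate_eq_prod_pow_mul_pow hab, hτ, one_mul]

end IteratedTwist

theorem inv_eq_of_tau_div_sq_eq_pow_seven_general {G F : Type*} [CommGroupWithZero G]
    [FunLike F G G] [MonoidHomClass F G G] {τ : F} {k m n : ℕ} (hk : k ^ n = m + 1)
    (hμ : ∀ x : G, x ^ m = 1 → x = 1) {a b : G} (ha : a ≠ 0) (hτ : τ^[n] a = a)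
    (hab : τ a / a ^ k = b ^ m) :
    a⁻¹ = ∏ i ∈ range n, τ^[i] b ^ k ^ (n - 1 - i) :=
  have hab' : τ a = b ^ m * a ^ k := (div_eq_iff (pow_ne_zero k ha)).mp hab
  inv_eq_of_mul_eq_one_right (hμ _ (mul_prod_iterate_pow_pow_eq_one hk ha hτ hab'))

/-- If `K` is a field with `μ₇(K) = {1}`, `τ` a field automorphism of `K` with `τ³ = id`,
and `a, b ∈ K×` satisfy `τ(a)/a² = b⁷`, then `a⁻¹ = τ(τ(b))·τ(b)²·b⁴`. -/
theorem inv_eq_of_tau_div_sq_eq_pow_seven (K : Type*) [Field K] (τ : K ≃+* K)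
    (hμ : ∀ x : K, x ^ 7 = 1 → x = 1)
    (hτ : ∀ x : K, τ (τ (τ x)) = x)
    (a b : K) (ha : a ≠ 0) (hb : b ≠ 0)
    (hab : τ a / a ^ 2 = b ^ 7) :
    a⁻¹ = τ (τ b) * (τ b) ^ 2 * b ^ 4 := by
  simpa [prod_range_succ, mul_comm, mul_left_comm] using
    inv_eq_of_tau_div_sq_eq_pow_seven_general (n := 3) (by norm_num) hμ ha (hτ a) hab
end

section
/- Let A be a positive integer and let u, v, w be integers with gcd(v, w) = 1 and u⁷ = v²(Av − w)w⁴. Then there exist integers a, b, r, s, t such that v = r⁷, Av − w = a·s⁷, w = b·t⁷, the integer a·b⁴ is a seventh power, and every prime dividing a or b divides A. -/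
/-!
Consider more generally `u ^ n = v ^ i * (A * v - w) ^ j * w ^ k` with `i`, `j`, `k` prime to `n`.
As `v` and `w` are relatively prime, `v` is relatively prime to `(A * v - w) ^ j * w ^ k`, and every
prime dividing both `A * v - w` and `w` divides `A`. So these two become relatively prime once the
primes dividing `A` are split off; the split-off parts are `a` and `b`. Relatively prime factors of
an `n`-th power are `n`-th powers up to units, and if `x ^ i` is an `n`-th power with `i` prime to
`n`, then so is `x`. If `A * v - w` or `w` vanishes nothing can be split off from it, but then all
primes dividing the other one divide `A`, and powers of that one serve as `a` and `b`.
-/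

theorem exists_dvd_add_mul_of_coprime {j n : ℕ} (hn : n ≠ 0) (hj : j.Coprime n) (k : ℕ) :
    ∃ m, n ∣ k + j * m := by
  obtain ⟨m, -, hm⟩ := Nat.exists_mul_mod_eq_of_coprime ((n - 1) * k) hj hn
  have hk : k + (n - 1) * k = n * k := by
    rw [Nat.sub_mul, one_mul, Nat.add_sub_cancel' (Nat.le_mul_of_pos_left k (by lia))]
  exact ⟨m, (((show _ ≡ _ [MOD n] from hm).add_left k).dvd_iff dvd_rfl).2 ⟨k, hk⟩⟩

theorem exists_pow_pow_mul_pow_eq_pow {M : Type*} [CommMonoid M] {j n : ℕ} (hn : n ≠ 0)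
    (hj : j.Coprime n) (k : ℕ) (x : M) : ∃ (m : ℕ) (c : M), (x ^ m) ^ j * x ^ k = c ^ n := by
  obtain ⟨m, q, hq⟩ := exists_dvd_add_mul_of_coprime hn hj k
  exact ⟨m, x ^ q, by rw [← pow_mul, ← pow_mul, ← pow_add, mul_comm q, ← hq]; ring_nf⟩

section UniqueFactorizationMonoid

variable {M : Type*} [CommMonoidWithZero M] [UniqueFactorizationMonoid M]
  {A b c x y z : M} {i j k n : ℕ}

theorem exists_eq_pow_of_pow_eq_pow_of_coprime (hn : n ≠ 0) (hi : i.Coprime n)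
    (h : x ^ i = z ^ n) : ∃ e, x = e ^ n := by
  rcases eq_or_ne x 0 with rfl | hx
  · exact ⟨0, (zero_pow hn).symm⟩
  obtain ⟨m, q, hq⟩ := exists_dvd_add_mul_of_coprime hn hi (n - 1)
  have hpow : (x ^ q) ^ n * x = (z ^ m * x) ^ n :=
    calc (x ^ q) ^ n * x = x ^ (n * q + 1) := by rw [← pow_mul, mul_comm q, pow_succ]
      _ = x ^ (i * m + n) := by rw [← hq]; congr 1; lia
      _ = (z ^ m * x) ^ n := by
        rw [pow_add, pow_mul, h, ← pow_mul, mul_comm n, pow_mul, mul_pow]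
  obtain ⟨e, he⟩ : x ^ q ∣ z ^ m * x :=
    (UniqueFactorizationMonoid.pow_dvd_pow_iff_dvd hn).1 ⟨x, hpow.symm⟩
  refine ⟨e, mul_left_cancel₀ (pow_ne_zero n (pow_ne_zero q hx)) ?_⟩
  rw [hpow, he, mul_pow]

theorem exists_eq_pow_of_mul_eq_pow_of_isRelPrime
    (hunit : ∀ ε : M, IsUnit ε → ∃ δ, ε = δ ^ n) (hxy : IsRelPrime x y) (h : x * y = z ^ n) :
    ∃ d, x = d ^ n := by
  let := UniqueFactorizationMonoid.toGCDMonoid M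
  obtain ⟨d, ε, hd⟩ := exists_associated_pow_of_mul_eq_pow (gcd_isUnit_iff_isRelPrime.2 hxy) h
  obtain ⟨δ, hδ⟩ := hunit ε ε.isUnit
  exact ⟨d * δ, by rw [← hd, hδ, mul_pow]⟩

theorem exists_eq_pow_of_pow_mul_eq_pow_of_isRelPrime (hn : n ≠ 0) (hi : i.Coprime n)
    (hunit : ∀ ε : M, IsUnit ε → ∃ δ, ε = δ ^ n) (hxy : IsRelPrime x y)
    (h : x ^ i * y = z ^ n) : ∃ e, x = e ^ n :=
  have ⟨_, hd⟩ := exists_eq_pow_of_mul_eq_pow_of_isRelPrime hunit hxy.pow_left h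
  exists_eq_pow_of_pow_eq_pow_of_coprime hn hi hd

theorem exists_eq_mul_prime_dvd_isRelPrime (A : M) (hx : x ≠ 0) :
    ∃ b c, x = b * c ∧ (∀ p, Prime p → p ∣ b → p ∣ A) ∧ IsRelPrime c A := by
  induction x using UniqueFactorizationMonoid.induction_on_prime with
  | h₁ => exact absurd rfl hx
  | h₂ x hxu =>
    exact ⟨1, x, (one_mul x).symm, fun p hp hp1 => absurd (isUnit_of_dvd_one hp1) hp.not_isUnit,
      hxu.isRelPrime_left⟩
  | h₃ x q hx0 hq ih =>
    obtain ⟨b, c, rfl, hb, hc⟩ := ih hx0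
    by_cases hqA : q ∣ A
    · refine ⟨q * b, c, (mul_assoc q b c).symm, fun p hp hpqb => ?_, hc⟩
      rcases hp.dvd_or_dvd hpqb with hpq | hpb
      · exact (hp.irreducible.associated_of_dvd hq.irreducible hpq).dvd.trans hqA
      · exact hb p hp hpb
    · exact ⟨b, q * c, mul_left_comm q b c, hb,
        (hq.irreducible.isRelPrime_iff_not_dvd.2 hqA).mul_left hc⟩

theorem isRelPrime_of_forall_prime_dvd (hb0 : b ≠ 0) (hb : ∀ p, Prime p → p ∣ b → p ∣ A)
    (hc : IsRelPrime c A) : IsRelPrime b c :=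
  (UniqueFactorizationMonoid.isRelPrime_iff_no_prime_factors hb0).2
    fun p hpb hpc hp => hp.not_isUnit (hc hpc (hb p hp hpb))

theorem exists_eq_mul_pow_of_pow_mul_pow_eq_pow_of_ne_zero (hn : n ≠ 0) (hj : j.Coprime n)
    (hk : k.Coprime n) (hunit : ∀ ε : M, IsUnit ε → ∃ δ, ε = δ ^ n) (hx : x ≠ 0) (hy : y ≠ 0)
    (hxy : ∀ p, Prime p → p ∣ x → p ∣ y → p ∣ A) (h : x ^ j * y ^ k = z ^ n) :
    ∃ a b s t, x = a * s ^ n ∧ y = b * t ^ n ∧ (∃ c, a ^ j * b ^ k = c ^ n) ∧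
      ∀ p, Prime p → (p ∣ a ∨ p ∣ b) → p ∣ A := by
  obtain ⟨a, s', rfl, ha, hs'⟩ := exists_eq_mul_prime_dvd_isRelPrime A hx
  obtain ⟨b, t', rfl, hb, ht'⟩ := exists_eq_mul_prime_dvd_isRelPrime A hy
  have ha0 := left_ne_zero_of_mul hx
  have hb0 := left_ne_zero_of_mul hy
  have has := isRelPrime_of_forall_prime_dvd ha0 ha hs'
  have hat := isRelPrime_of_forall_prime_dvd ha0 ha ht'
  have hbs := isRelPrime_of_forall_prime_dvd hb0 hb hs'
  have hbt := isRelPrime_of_forall_prime_dvd hb0 hb ht'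
  have hst : IsRelPrime s' t' :=
    (UniqueFactorizationMonoid.isRelPrime_iff_no_prime_factors (right_ne_zero_of_mul hx)).2
      fun p hps hpt hp => hp.not_isUnit
        (hs' hps (hxy p hp (hps.mul_left a) (hpt.mul_left b)))
  obtain ⟨s, rfl⟩ : ∃ s, s' = s ^ n :=
    exists_eq_pow_of_pow_mul_eq_pow_of_isRelPrime hn hj hunit
      (has.symm.pow_right.mul_right (hbs.symm.mul_right hst).pow_right)
      (y := a ^ j * (b * t') ^ k) (by rw [← h, mul_pow a]; ac_rfl)
  obtain ⟨t, rfl⟩ : ∃ t, t' = t ^ n :=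
    exists_eq_pow_of_pow_mul_eq_pow_of_isRelPrime hn hk hunit
      (hbt.symm.pow_right.mul_right (hat.symm.mul_right hst.symm).pow_right)
      (y := b ^ k * (a * s ^ n) ^ j) (by rw [← h, mul_pow b]; ac_rfl)
  have hab : ∃ c, a ^ j * b ^ k = c ^ n :=
    exists_eq_pow_of_mul_eq_pow_of_isRelPrime hunit
      ((has.pow.mul_right hat.pow).mul_left (hbs.pow.mul_right hbt.pow))
      (y := (s ^ n) ^ j * (t ^ n) ^ k) (by rw [← h, mul_pow a, mul_pow b]; ac_rfl)
  exact ⟨a, b, s, t, rfl, rfl, hab, fun p hp hpab => hpab.elim (ha p hp) (hb p hp)⟩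

theorem exists_eq_mul_pow_of_pow_mul_pow_eq_pow (hn : n ≠ 0) (hj : j.Coprime n)
    (hk : k.Coprime n) (hunit : ∀ ε : M, IsUnit ε → ∃ δ, ε = δ ^ n)
    (hxy : ∀ p, Prime p → p ∣ x → p ∣ y → p ∣ A) (h : x ^ j * y ^ k = z ^ n) :
    ∃ a b s t, x = a * s ^ n ∧ y = b * t ^ n ∧ (∃ c, a ^ j * b ^ k = c ^ n) ∧
      ∀ p, Prime p → (p ∣ a ∨ p ∣ b) → p ∣ A := by
  rcases eq_or_ne x 0 with rfl | hx
  · obtain ⟨m, c, hc⟩ := exists_pow_pow_mul_pow_eq_pow hn hj k y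
    have hyA : ∀ p, Prime p → p ∣ y → p ∣ A := fun p hp => hxy p hp (dvd_zero p)
    exact ⟨y ^ m, y, 0, 1, by simp [hn], by simp, ⟨c, hc⟩, fun p hp hpab =>
      hyA p hp (hpab.elim hp.dvd_of_dvd_pow id)⟩
  rcases eq_or_ne y 0 with rfl | hy
  · obtain ⟨m, c, hc⟩ := exists_pow_pow_mul_pow_eq_pow hn hk j x
    have hxA : ∀ p, Prime p → p ∣ x → p ∣ A := fun p hp hpx => hxy p hp hpx (dvd_zero p)
    exact ⟨x, x ^ m, 1, 0, by simp, by simp [hn], ⟨c, by rw [mul_comm, hc]⟩, fun p hp hpab =>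
      hxA p hp (hpab.elim id hp.dvd_of_dvd_pow)⟩
  exact exists_eq_mul_pow_of_pow_mul_pow_eq_pow_of_ne_zero hn hj hk hunit hx hy hxy h

end UniqueFactorizationMonoid

theorem superelliptic_descent_general {R : Type*} [CommRing R] [UniqueFactorizationMonoid R]
    {i j k n : ℕ} (hn : n ≠ 0) (hi : i.Coprime n) (hj : j.Coprime n) (hk : k.Coprime n)
    (hunit : ∀ ε : R, IsUnit ε → ∃ δ, ε = δ ^ n) {A u v w : R} (hvw : IsRelPrime v w)
    (h : u ^ n = v ^ i * (A * v - w) ^ j * w ^ k) :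
    ∃ a b r s t : R,
      v = r ^ n ∧ A * v - w = a * s ^ n ∧ w = b * t ^ n ∧
      (∃ c, a ^ j * b ^ k = c ^ n) ∧
      (∀ p, Prime p → (p ∣ a ∨ p ∣ b) → p ∣ A) := by
  have hvx : IsRelPrime v (A * v - w) :=
    IsRelPrime.mul_sub_right_right_iff.2 hvw
  have hrest : IsRelPrime v ((A * v - w) ^ j * w ^ k) :=
    hvx.pow_right.mul_right hvw.pow_right
  obtain ⟨r, hr⟩ : ∃ r, v = r ^ n :=
    exists_eq_pow_of_pow_mul_eq_pow_of_isRelPrime hn hi hunit hrest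
      (by rw [h, mul_assoc])
  obtain ⟨z, hz⟩ : ∃ z, (A * v - w) ^ j * w ^ k = z ^ n :=
    exists_eq_pow_of_mul_eq_pow_of_isRelPrime hunit (y := v ^ i) hrest.symm.pow_right
      (by rw [h]; ring)
  have hcommon (p : R) (hp : Prime p) (hpx : p ∣ A * v - w) (hpw : p ∣ w) : p ∣ A :=
    (hp.dvd_or_dvd ((dvd_sub_left hpw).1 hpx)).resolve_right
      fun hpv => hp.not_isUnit (hvw hpv hpw)
  obtain ⟨a, b, s, t, hx, hw, hab, hA⟩ :=
    exists_eq_mul_pow_of_pow_mul_pow_eq_pow hn hj hk hunit hcommon hz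
  exact ⟨a, b, r, s, t, hr, hx, hw, hab, hA⟩

theorem exists_int_eq_pow_of_isUnit_of_odd {n : ℕ} (hn : Odd n) (ε : ℤ) (hε : IsUnit ε) :
    ∃ δ, ε = δ ^ n := by
  rcases Int.isUnit_iff.1 hε with rfl | rfl
  · exact ⟨1, (one_pow n).symm⟩
  · exact ⟨-1, hn.neg_one_pow.symm⟩

/-- Descent for `u⁷ = v²(Av - w)w⁴` with `gcd(v, w) = 1`: each factor is a seventh power
up to unit factors `a`, `b` supported on primes dividing `A`, with `ab⁴` a seventh power. -/
theorem superelliptic_descent (A : ℤ) (hA : 0 < A) (u v w : ℤ)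
    (hvw : Int.gcd v w = 1) (h : u ^ 7 = v ^ 2 * (A * v - w) * w ^ 4) :
    ∃ a b r s t : ℤ,
      v = r ^ 7 ∧ A * v - w = a * s ^ 7 ∧ w = b * t ^ 7 ∧
      (∃ k : ℤ, a * b ^ 4 = k ^ 7) ∧
      (∀ p : ℤ, Prime p → (p ∣ a ∨ p ∣ b) → p ∣ A) := by
  simpa only [pow_one] using superelliptic_descent_general (i := 2) (j := 1) (k := 4)
    (by decide) (by decide) (by decide) (by decide)
    (exists_int_eq_pow_of_isUnit_of_odd (by decide))
    (Int.isCoprime_iff_gcd_eq_one.2 hvw).isRelPrime (by rwa [pow_one])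
end
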